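/- Let F be a field of characteristic zero, let V and V′ be finite-dimensional F-vector spaces, and let M, M′ be automorphisms of V, V′ with Jordan–Chevalley decompositions M = M_s + M_n and M′ = M′_s + M′_n. Let W be the weight filtration on V centered at w ∈ ℤ associated to M_n and W′ the weight filtration on V′ centered at w′ ∈ ℤ associated to M′_n. If M ⊗ M′ = T + P is a Jordan–Chevalley decomposition of the automorphism M ⊗ M′ of V ⊗ V′ (T semisimple, P nilpotent, T ∘ P = P ∘ T), then the weight filtration on V ⊗ V′ centered at w + w′ associated to P is the tensor product filtration W ⊗ W′, defined by (W ⊗ W′)_i = Σ_{i₁+i₂=i} W_{i₁} ⊗ W′_{i₂}. -/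

import Mathlib

open TensorProduct

/-- `W` is an ascending filtration on `V`, exhaustive and separated, which is the weight
filtration centered at `w` associated to the nilpotent endomorphism `N`. -/
def IsWeightFiltration {F V : Type*} [Field F] [AddCommGroup V] [Module F V]
    (N : V →ₗ[F] V) (w : ℤ) (W : ℤ → Submodule F V) : Prop :=
  Monotone W ∧
  (∃ a : ℤ, ∀ i ≤ a, W i = ⊥) ∧
  (∃ b : ℤ, ∀ i, b ≤ i → W i = ⊤) ∧
  (∀ i : ℤ, (W i).map N ≤ W (i - 2)) ∧
  (∀ α : ℤ, 0 < α →
    W (w - α) ≤ W (w - α - 1) ⊔ (W (w + α)).map (N ^ α.toNat) ∧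
    ∀ v ∈ W (w + α), (N ^ α.toNat) v ∈ W (w - α - 1) → v ∈ W (w + α - 1))

/-!
A nilpotent `N` on a finite-dimensional space is a sum of Jordan blocks, and a Jordan block of size
`k` is the quotient by `X ^ k` of the Verma module of highest weight `k - 1`, with multiplication by
`X` as lowering operator; so `N` is the lowering operator of an `𝔰𝔩₂`-triple `(h, e, N)` with
integral weights. The Casimir element shows that `N ^ n` maps the weight space of weight `n`
isomorphically onto that of weight `-n`, hence the filtration by `h`-weights is, up to a shift, the
weight filtration of `N`, which is unique. Triples add on tensor products, so the weights of
`N ⊗ 1 + 1 ⊗ N'` are the sums of weights and its weight filtration is `W ⊗ W'`.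

With `N = Ms⁻¹ Mn` and `N' = Ms'⁻¹ Mn'`, the nilpotent part of `M ⊗ M'` is
`(Ms ⊗ Ms') (N ⊗ 1 + 1 ⊗ N' + N ⊗ N')`. The term `N ⊗ N'` lowers the filtration by four, and a term
lowering it by at least three does not affect the maps induced on the graded pieces; nor does an
invertible factor commuting with a nilpotent endomorphism change its weight filtration.
-/

section WeightFiltration

variable {F V U : Type*} [Field F] [AddCommGroup V] [Module F V] [AddCommGroup U] [Module F U]
  {N : Module.End F V} {w : ℤ} {W : ℤ → Submodule F V}

theorem pow_apply_mem_of_map_le {R M : Type*} [Semiring R] [AddCommMonoid M] [Module R M]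
    {f : Module.End R M} {G : ℤ → Submodule R M} {d : ℤ} (hf : ∀ i, (G i).map f ≤ G (i - d))
    (n : ℕ) {i : ℤ} {v : M} (hv : v ∈ G i) : (f ^ n) v ∈ G (i - n * d) := by
  induction n with
  | zero => simpa using hv
  | succ n ih =>
    rw [pow_succ', Module.End.mul_apply,
      show i - (n + 1 : ℕ) * d = i - n * d - d by push_cast; ring]
    exact hf _ (Submodule.mem_map_of_mem ih)

theorem exists_pow_apply_eq_zero_of_map_le {R M : Type*} [Semiring R] [AddCommMonoid M]
    [Module R M] {f : Module.End R M} {G : ℤ → Submodule R M} {d : ℤ}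
    (hf : ∀ i, (G i).map f ≤ G (i - d)) (hd : d ≠ 0) (hfin : {i | G i ≠ ⊥}.Finite) {i : ℤ}
    {v : M} (hv : v ∈ G i) : ∃ n : ℕ, (f ^ n) v = 0 := by
  by_contra! hne
  refine Set.infinite_of_injective_forall_mem (f := fun n : ℕ => i - n * d) ?_ (fun n => ?_) hfin
  · intro m n hmn
    simpa [hd] using hmn
  · exact (Submodule.ne_bot_iff _).2 ⟨_, pow_apply_mem_of_map_le hf n hv, hne n⟩

namespace IsWeightFiltration

theorem monotone (hW : IsWeightFiltration N w W) : Monotone W := hW.1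

theorem map_le (hW : IsWeightFiltration N w W) (i : ℤ) : (W i).map N ≤ W (i - 2) :=
  hW.2.2.2.1 i

theorem le_sup_map_pow (hW : IsWeightFiltration N w W) {n : ℕ} (hn : 0 < n) :
    W (w - n) ≤ W (w - n - 1) ⊔ (W (w + n)).map (N ^ n) :=
  (hW.2.2.2.2 n (by exact_mod_cast hn)).1

theorem mem_of_pow_apply_mem (hW : IsWeightFiltration N w W) {n : ℕ} (hn : 0 < n) {v : V}
    (hv : v ∈ W (w + n)) (hNv : (N ^ n) v ∈ W (w - n - 1)) : v ∈ W (w + n - 1) :=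
  (hW.2.2.2.2 n (by exact_mod_cast hn)).2 v hv hNv

theorem of_nat (hmono : Monotone W) (hbot : ∃ a, ∀ i ≤ a, W i = ⊥)
    (htop : ∃ b, ∀ i, b ≤ i → W i = ⊤) (hmap : ∀ i, (W i).map N ≤ W (i - 2))
    (hle : ∀ n : ℕ, 0 < n → W (w - n) ≤ W (w - n - 1) ⊔ (W (w + n)).map (N ^ n))
    (hmem : ∀ n : ℕ, 0 < n → ∀ v ∈ W (w + n), (N ^ n) v ∈ W (w - n - 1) → v ∈ W (w + n - 1)) :
    IsWeightFiltration N w W := by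
  refine ⟨hmono, hbot, htop, hmap, fun α hα => ?_⟩
  lift α to ℕ using hα.le
  exact ⟨hle α (by exact_mod_cast hα), hmem α (by exact_mod_cast hα)⟩

theorem pow_apply_mem (hW : IsWeightFiltration N w W) (n : ℕ) {i : ℤ} {v : V} (hv : v ∈ W i) :
    (N ^ n) v ∈ W (i - n * 2) :=
  pow_apply_mem_of_map_le hW.map_le n hv

theorem isNilpotent (hW : IsWeightFiltration N w W) : IsNilpotent N := by
  obtain ⟨a, ha⟩ := hW.2.1
  obtain ⟨b, hb⟩ := hW.2.2.1
  refine ⟨(b - a).toNat, LinearMap.ext fun v => ?_⟩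
  have hv : v ∈ W (max a b) := by simp [hb _ (le_max_right a b)]
  have hNv := hW.pow_apply_mem (b - a).toNat hv
  rwa [ha _ (by omega), Submodule.mem_bot] at hNv

theorem mem_of_forall_pow_apply_mem (hW : IsWeightFiltration N w W) {l : ℕ} {v : V}
    (hv : ∀ n : ℕ, l < n → (N ^ n) v ∈ W (w - n - 1)) : v ∈ W (w + l) := by
  obtain ⟨b, hb⟩ := hW.2.2.1
  have descend : ∀ d : ℕ, v ∈ W (w + l + d) → v ∈ W (w + l) := by
    intro d
    induction d with
    | zero => simp
    | succ d ih =>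
      intro h
      refine ih ?_
      have hstep := hW.mem_of_pow_apply_mem (n := l + d + 1) (by omega)
        (by convert h using 2; push_cast; ring) (hv _ (by omega))
      convert hstep using 2
      push_cast; ring
  refine descend (b - w - l).toNat ?_
  rw [hb _ (by omega)]
  exact Submodule.mem_top

theorem apply_add_le_of_forall_apply_sub_le {G : ℤ → Submodule F V}
    (hW : IsWeightFiltration N w W) (hG : IsWeightFiltration N w G) {l : ℕ}
    (hle : ∀ n : ℕ, l < n → W (w - n) ≤ G (w - n)) : W (w + l) ≤ G (w + l) := by
  intro v hv
  refine hG.mem_of_forall_pow_apply_mem fun n hn => ?_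
  have hNv : (N ^ n) v ∈ W (w - (n + 1 : ℕ)) :=
    hW.monotone (by push_cast; omega) (hW.pow_apply_mem n hv)
  convert hle (n + 1) (by omega) hNv using 2
  push_cast; ring

theorem apply_sub_le {G : ℤ → Submodule F V}
    (hW : IsWeightFiltration N w W) (hG : IsWeightFiltration N w G) (l : ℕ) :
    W (w - l) ≤ G (w - l) := by
  obtain ⟨a, ha⟩ := hW.2.1
  -- Induction from the bottom step upwards: `W (w + l)` is controlled by the steps below `w - l`,
  -- and `N ^ l` carries that control over to `W (w - l)`.
  induction h : (w - a - l).toNat using Nat.strong_induction_on generalizing l with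
  | _ d ih =>
  by_cases hl : w - l ≤ a
  · simp [ha _ hl]
  have hbelow : ∀ n : ℕ, l < n → W (w - n) ≤ G (w - n) := fun n hn => ih _ (by omega) n rfl
  have habove : W (w + l) ≤ G (w + l) := hW.apply_add_le_of_forall_apply_sub_le hG hbelow
  rcases Nat.eq_zero_or_pos l with rfl | hpos
  · simpa using habove
  refine (hW.le_sup_map_pow hpos).trans (sup_le ?_ ?_)
  · have hsucc := hbelow (l + 1) (by omega)
    rw [show w - (l + 1 : ℕ) = w - l - 1 by push_cast; ring] at hsucc
    exact hsucc.trans (hG.monotone (by omega))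
  · rintro _ ⟨v, hv, rfl⟩
    exact hG.monotone (by omega) (hG.pow_apply_mem l (habove hv))

theorem le {G : ℤ → Submodule F V} (hW : IsWeightFiltration N w W)
    (hG : IsWeightFiltration N w G) : W ≤ G := by
  intro i
  rcases le_total w i with hi | hi
  · obtain ⟨l, rfl⟩ := Int.le.dest hi
    exact hW.apply_add_le_of_forall_apply_sub_le hG fun n _ => hW.apply_sub_le hG n
  · obtain ⟨l, rfl⟩ := Int.le.dest hi
    simpa using hW.apply_sub_le hG l

theorem unique {G : ℤ → Submodule F V} (hW : IsWeightFiltration N w W)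
    (hG : IsWeightFiltration N w G) : W = G :=
  le_antisymm (hW.le hG) (hG.le hW)

theorem shift (hW : IsWeightFiltration N w W) (c : ℤ) :
    IsWeightFiltration N (w + c) fun i => W (i - c) := by
  obtain ⟨a, ha⟩ := hW.2.1
  obtain ⟨b, hb⟩ := hW.2.2.1
  have hlow (n : ℤ) : w + c - n - c = w - n := by ring
  have hlow_pred (n : ℤ) : w + c - n - 1 - c = w - n - 1 := by ring
  have hhigh (n : ℤ) : w + c + n - c = w + n := by ring
  have hhigh_pred (n : ℤ) : w + c + n - 1 - c = w + n - 1 := by ring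
  refine of_nat (fun i j hij => hW.monotone (by omega)) ⟨a + c, fun i hi => ha _ (by omega)⟩
    ⟨b + c, fun i hi => hb _ (by omega)⟩ (fun i => ?_) (fun n hn => ?_) fun n hn v => ?_
  · simpa only [sub_right_comm] using hW.map_le (i - c)
  · simpa only [hlow, hlow_pred, hhigh] using hW.le_sup_map_pow hn
  · simpa only [hlow_pred, hhigh, hhigh_pred] using hW.mem_of_pow_apply_mem hn

theorem map_equiv (hW : IsWeightFiltration N w W) (φ : V ≃ₗ[F] U) {N' : Module.End F U}
    (hφ : Function.Semiconj φ N N') :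
    IsWeightFiltration N' w fun i => (W i).map (φ : V →ₗ[F] U) := by
  obtain ⟨a, ha⟩ := hW.2.1
  obtain ⟨b, hb⟩ := hW.2.2.1
  have hpow (n : ℕ) (v : V) : (N' ^ n) (φ v) = φ ((N ^ n) v) := by
    simpa [Module.End.pow_apply] using (hφ.iterate_right n v).symm
  have hmap (n : ℕ) (G : Submodule F V) :
      (G.map (φ : V →ₗ[F] U)).map (N' ^ n) = (G.map (N ^ n)).map (φ : V →ₗ[F] U) := by
    simp only [← Submodule.map_comp]
    exact congrArg (G.map ·) (LinearMap.ext (hpow n))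
  refine of_nat (fun i j hij => Submodule.map_mono (hW.monotone hij))
    ⟨a, fun i hi => by simp [ha i hi]⟩ ⟨b, fun i hi => by simp [hb i hi]⟩
    (fun i => ?_) (fun n hn => ?_) ?_
  · rw [← pow_one N', hmap, pow_one]
    exact Submodule.map_mono (hW.map_le i)
  · rw [hmap, ← Submodule.map_sup]
    exact Submodule.map_mono (hW.le_sup_map_pow hn)
  · rintro n hn _ ⟨v, hv, rfl⟩ hNv
    refine Submodule.mem_map_of_mem (hW.mem_of_pow_apply_mem hn hv ?_)
    rw [LinearEquiv.coe_coe, hpow] at hNv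
    simpa using hNv

theorem map_unit_eq (hW : IsWeightFiltration N w W) {u : (Module.End F V)ˣ}
    (hu : Commute (u : Module.End F V) N) (i : ℤ) : (W i).map (u : Module.End F V) = W i :=
  congrFun ((hW.map_equiv (LinearMap.GeneralLinearGroup.generalLinearEquiv F V u)
    (LinearMap.congr_fun hu.eq)).unique hW) i

theorem unit_mul (hW : IsWeightFiltration N w W) {u : (Module.End F V)ˣ}
    (hu : Commute (u : Module.End F V) N) :
    IsWeightFiltration ((u : Module.End F V) * N) w W := by
  have hpow (n : ℕ) : ((u : Module.End F V) * N) ^ n = ((u ^ n :) : Module.End F V) * N ^ n := by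
    rw [hu.mul_pow, Units.val_pow_eq_pow_val]
  have hmap (n : ℕ) (i : ℤ) : (W i).map ((u ^ n :) : Module.End F V) = W i :=
    hW.map_unit_eq (by simpa using hu.pow_left n) i
  refine of_nat hW.monotone hW.2.1 hW.2.2.1 (fun i => ?_) (fun n hn => ?_) fun n hn v hv hNv => ?_
  · rw [Module.End.mul_eq_comp, Submodule.map_comp, ← hW.map_unit_eq hu (i - 2)]
    exact Submodule.map_mono (hW.map_le i)
  · rw [hpow, Module.End.mul_eq_comp, Submodule.map_comp, ← hmap n (w - n),
      ← hmap n (w - n - 1), ← Submodule.map_sup]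
    exact Submodule.map_mono (hW.le_sup_map_pow hn)
  · refine hW.mem_of_pow_apply_mem hn hv ?_
    rw [hpow, ← hmap n (w - n - 1)] at hNv
    obtain ⟨x, hx, hxv⟩ := hNv
    rwa [← ((Module.End.isUnit_iff _).1 (u ^ n).isUnit).1 hxv]

theorem add_of_map_le_sub_three (hW : IsWeightFiltration N w W) {R : Module.End F V}
    (hR : ∀ i, (W i).map R ≤ W (i - 3)) : IsWeightFiltration (N + R) w W := by
  have hmap : ∀ i, (W i).map (N + R) ≤ W (i - 2) := by
    rintro i _ ⟨v, hv, rfl⟩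
    exact add_mem (hW.map_le i ⟨v, hv, rfl⟩) (hW.monotone (by omega) (hR i ⟨v, hv, rfl⟩))
  have hpow_sub (n : ℕ) {i : ℤ} {v : V} (hv : v ∈ W i) :
      ((N + R) ^ n) v - (N ^ n) v ∈ W (i - n * 2 - 1) := by
    induction n with
    | zero => simp
    | succ n ih =>
      have hN := hW.map_le _ ⟨_, ih, rfl⟩
      have hRpow := hR _ ⟨_, pow_apply_mem_of_map_le hmap n hv, rfl⟩
      rw [show i - (n + 1 : ℕ) * 2 - 1 = i - n * 2 - 1 - 2 by push_cast; ring]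
      rw [show i - n * 2 - 3 = i - n * 2 - 1 - 2 by ring] at hRpow
      convert add_mem hN hRpow using 1
      simp only [pow_succ', Module.End.mul_apply, LinearMap.add_apply, map_sub]
      abel
  have hpow_sub_center {n : ℕ} {v : V} (hv : v ∈ W (w + n)) :
      ((N + R) ^ n) v - (N ^ n) v ∈ W (w - n - 1) := by
    convert hpow_sub n hv using 2
    ring
  refine of_nat hW.monotone hW.2.1 hW.2.2.1 hmap (fun n hn => ?_) fun n hn v hv hNv => ?_
  · refine (hW.le_sup_map_pow hn).trans (sup_le le_sup_left ?_)
    rintro _ ⟨v, hv, rfl⟩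
    rw [← sub_sub_self (((N + R) ^ n) v) ((N ^ n) v)]
    exact sub_mem (Submodule.mem_sup_right (Submodule.mem_map_of_mem hv))
      (Submodule.mem_sup_left (hpow_sub_center hv))
  · refine hW.mem_of_pow_apply_mem hn hv ?_
    simpa using sub_mem hNv (hpow_sub_center hv)

end IsWeightFiltration

end WeightFiltration

section Grading

/-- The ascending filtration `i ↦ ⨆ k ≤ i, E k` attached to a family `E` of submodules, thought of
as the homogeneous components of a `ℤ`-grading. -/
def filtrationOfGrading {R M : Type*} [CommRing R] [AddCommGroup M] [Module R M]
    (E : ℤ → Submodule R M) (i : ℤ) : Submodule R M :=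
  ⨆ k, ⨆ _ : k ≤ i, E k

section

variable {R M : Type*} [CommRing R] [AddCommGroup M] [Module R M] {E : ℤ → Submodule R M}

theorem le_filtrationOfGrading {k i : ℤ} (hki : k ≤ i) : E k ≤ filtrationOfGrading E i :=
  le_iSup₂_of_le k hki le_rfl

theorem filtrationOfGrading_mono : Monotone (filtrationOfGrading E) := fun _ _ hij =>
  iSup₂_le fun _ hk => le_filtrationOfGrading (hk.trans hij)

theorem filtrationOfGrading_le_sup (i : ℤ) :
    filtrationOfGrading E i ≤ E i ⊔ filtrationOfGrading E (i - 1) := by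
  refine iSup₂_le fun k hk => ?_
  rcases hk.eq_or_lt with rfl | hlt
  · exact le_sup_left
  · exact le_sup_of_le_right (le_filtrationOfGrading (by omega))

theorem disjoint_filtrationOfGrading (hE : iSupIndep E) {i k : ℤ} (hik : i < k) :
    Disjoint (E k) (filtrationOfGrading E i) :=
  (hE k).mono_right (iSup₂_le fun j hj => le_iSup₂_of_le j (by omega) le_rfl)

theorem map_filtrationOfGrading_le {f : Module.End R M} {d : ℤ}
    (hf : ∀ k, (E k).map f ≤ E (k - d)) (i : ℤ) :
    (filtrationOfGrading E i).map f ≤ filtrationOfGrading E (i - d) := by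
  simp only [filtrationOfGrading, Submodule.map_iSup]
  exact iSup₂_le fun k hk => (hf k).trans (le_filtrationOfGrading (by omega))

theorem exists_filtrationOfGrading_eq_bot (hfin : {k | E k ≠ ⊥}.Finite) :
    ∃ a, ∀ i ≤ a, filtrationOfGrading E i = ⊥ := by
  obtain ⟨a, ha⟩ := hfin.bddBelow
  refine ⟨a - 1, fun i hi => eq_bot_iff.2 (iSup₂_le fun k hk => le_of_eq ?_)⟩
  by_contra hne
  have := ha hne
  omega

theorem exists_filtrationOfGrading_eq_top (hfin : {k | E k ≠ ⊥}.Finite) (htop : ⨆ k, E k = ⊤) :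
    ∃ b, ∀ i, b ≤ i → filtrationOfGrading E i = ⊤ := by
  obtain ⟨b, hb⟩ := hfin.bddAbove
  refine ⟨b, fun i hi => eq_top_iff.2 (htop.ge.trans (iSup_le fun k => ?_))⟩
  by_cases hk : E k = ⊥
  · simp [hk]
  · exact le_filtrationOfGrading ((hb hk).trans hi)

end

theorem isWeightFiltration_filtrationOfGrading {F V : Type*} [Field F] [AddCommGroup V]
    [Module F V] {N : Module.End F V} {E : ℤ → Submodule F V} (hind : iSupIndep E)
    (htop : ⨆ k, E k = ⊤) (hfin : {k | E k ≠ ⊥}.Finite) (hN : ∀ k, (E k).map N ≤ E (k - 2))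
    (hinj : ∀ n : ℕ, ∀ v ∈ E n, (N ^ n) v = 0 → v = 0)
    (hsurj : ∀ n : ℕ, E (-n) ≤ (E n).map (N ^ n)) :
    IsWeightFiltration N 0 (filtrationOfGrading E) := by
  have hfil := map_filtrationOfGrading_le hN
  refine .of_nat filtrationOfGrading_mono (exists_filtrationOfGrading_eq_bot hfin)
    (exists_filtrationOfGrading_eq_top hfin htop) hfil (fun n _ => ?_) fun n _ v hv hNv => ?_
  · rw [zero_sub, zero_add]
    refine (filtrationOfGrading_le_sup _).trans (sup_le (le_sup_of_le_right ?_) le_sup_left)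
    exact (hsurj n).trans (Submodule.map_mono (le_filtrationOfGrading le_rfl))
  · rw [zero_sub] at hNv
    rw [zero_add] at hv ⊢
    obtain ⟨x, hx, y, hy, rfl⟩ := Submodule.mem_sup.1 (filtrationOfGrading_le_sup _ hv)
    have hNy : (N ^ n) y ∈ filtrationOfGrading E (-n - 1) := by
      convert pow_apply_mem_of_map_le hfil n hy using 2
      ring
    have hNx_fil : (N ^ n) x ∈ filtrationOfGrading E (-n - 1) := by
      simpa using sub_mem hNv hNy
    have hNx : (N ^ n) x ∈ E (-n) := by
      convert pow_apply_mem_of_map_le hN n hx using 2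
      ring
    have hx0 : x = 0 := hinj n x hx
      (Submodule.disjoint_def.1 (disjoint_filtrationOfGrading hind (by omega)) _ hNx hNx_fil)
    simpa [hx0] using hy

end Grading

section TensorConvolution

variable {R M M' : Type*} [CommRing R] [AddCommGroup M] [Module R M]
  [AddCommGroup M'] [Module R M']

/-- The family `i ↦ ⨆ j, W j ⊗ W' (i - j)` of submodules of `M ⊗ M'`. It is the tensor product of
filtrations when `W` and `W'` are filtrations, and the tensor product of gradings when they are
the homogeneous components of gradings. -/
def tensorConvolution (W : ℤ → Submodule R M) (W' : ℤ → Submodule R M') (i : ℤ) :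
    Submodule R (M ⊗[R] M') :=
  ⨆ j, Submodule.map₂ (TensorProduct.mk R M M') (W j) (W' (i - j))

variable {W : ℤ → Submodule R M} {W' : ℤ → Submodule R M'}

theorem map₂_le_tensorConvolution {a b i : ℤ} (hab : a + b = i) :
    Submodule.map₂ (TensorProduct.mk R M M') (W a) (W' b) ≤ tensorConvolution W W' i := by
  subst hab
  exact le_iSup_of_le a (by rw [add_sub_cancel_left])

theorem map_tensorConvolution_le {f : Module.End R M} {f' : Module.End R M'} {d d' : ℤ}
    (hf : ∀ i, (W i).map f ≤ W (i - d)) (hf' : ∀ i, (W' i).map f' ≤ W' (i - d')) (i : ℤ) :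
    (tensorConvolution W W' i).map (TensorProduct.map f f') ≤
      tensorConvolution W W' (i - (d + d')) := by
  rw [tensorConvolution, Submodule.map_iSup]
  refine iSup_le fun j => ?_
  rw [Submodule.map_le_iff_le_comap, Submodule.map₂_le]
  intro x hx y hy
  exact map₂_le_tensorConvolution (by ring)
    (Submodule.apply_mem_map₂ _ (hf j ⟨x, hx, rfl⟩) (hf' (i - j) ⟨y, hy, rfl⟩))

theorem iSup_tensorConvolution_eq_top (hW : ⨆ k, W k = ⊤) (hW' : ⨆ k, W' k = ⊤) :
    ⨆ k, tensorConvolution W W' k = ⊤ := by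
  rw [eq_top_iff, ← TensorProduct.map₂_mk_top_top_eq_top, ← hW, ← hW']
  simp only [Submodule.map₂_iSup_left, Submodule.map₂_iSup_right]
  exact iSup₂_le fun b a => le_iSup_of_le (a + b) (map₂_le_tensorConvolution (by ring))

theorem tensorConvolution_filtrationOfGrading (w w' i : ℤ) :
    tensorConvolution (fun j => filtrationOfGrading W (j - w))
        (fun j => filtrationOfGrading W' (j - w')) i =
      filtrationOfGrading (tensorConvolution W W') (i - (w + w')) := by
  apply le_antisymm
  · simp only [tensorConvolution, filtrationOfGrading, Submodule.map₂_iSup_left,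
      Submodule.map₂_iSup_right]
    refine iSup_le fun j => iSup₂_le fun b hb => iSup₂_le fun a ha => ?_
    exact (map₂_le_tensorConvolution rfl).trans
      (le_iSup₂_of_le (f := fun k _ => tensorConvolution W W' k) (a + b) (by omega) le_rfl)
  · refine iSup₂_le fun k hk => iSup_le fun a => ?_
    exact le_iSup_of_le (a + w) (Submodule.map₂_le_map₂ (le_filtrationOfGrading (by omega))
      (le_filtrationOfGrading (by omega)))

end TensorConvolution

section Sl2

/-- The commutation relations `[e, f] = h`, `[h, e] = 2e`, `[h, f] = -2f` of an `𝔰𝔩₂`-triple in an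
associative ring, written without commutators. Unlike in Mathlib's `IsSl2Triple` the case `h = 0` is
allowed, so that the zero endomorphism is also completed to a triple. -/
structure Sl2Relations {A : Type*} [Ring A] (h e f : A) : Prop where
  raise_mul_lower : e * f = f * e + h
  weight_mul_raise : h * e = e * h + 2 * e
  weight_mul_lower : h * f = f * h - 2 * f

/-- The Casimir element of an `𝔰𝔩₂`-triple in an associative ring, normalized as a rescaling and
shift of the usual one so that `4 * (e * f)` acts on vectors of weight `m` as
`casimir h e f - (m - 1) ^ 2`. -/
def casimir {A : Type*} [Ring A] (h e f : A) : A := 4 * (e * f) + (h - 1) ^ 2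

namespace Sl2Relations

variable {A : Type*} [Ring A] {h e f : A}

theorem symm (H : Sl2Relations h e f) : Sl2Relations (-h) f e where
  raise_mul_lower := by rw [H.raise_mul_lower, add_neg_cancel_right]
  weight_mul_raise := by
    rw [neg_mul, H.weight_mul_lower, mul_neg]
    abel
  weight_mul_lower := by
    rw [neg_mul, H.weight_mul_raise, mul_neg]
    abel

theorem map {B : Type*} [Ring B] (H : Sl2Relations h e f) (φ : A →+* B) :
    Sl2Relations (φ h) (φ e) (φ f) where
  raise_mul_lower := by simpa using congrArg φ H.raise_mul_lower
  weight_mul_raise := by simpa [map_ofNat] using congrArg φ H.weight_mul_raise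
  weight_mul_lower := by simpa [map_ofNat] using congrArg φ H.weight_mul_lower

theorem add {h' e' f' : A} (H : Sl2Relations h e f) (H' : Sl2Relations h' e' f')
    (hef' : Commute e f') (he'f : Commute e' f) (hhe' : Commute h e') (hh'e : Commute h' e)
    (hhf' : Commute h f') (hh'f : Commute h' f) : Sl2Relations (h + h') (e + e') (f + f') where
  raise_mul_lower := by
    rw [add_mul, mul_add, mul_add, H.raise_mul_lower, H'.raise_mul_lower, hef'.eq, he'f.eq]
    noncomm_ring
  weight_mul_raise := by
    rw [add_mul, mul_add, mul_add, H.weight_mul_raise, H'.weight_mul_raise, hhe'.eq, hh'e.eq]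
    noncomm_ring
  weight_mul_lower := by
    rw [add_mul, mul_add, mul_add, H.weight_mul_lower, H'.weight_mul_lower, hhf'.eq, hh'f.eq]
    noncomm_ring

theorem casimir_symm (H : Sl2Relations h e f) : casimir (-h) f e = casimir h e f := by
  rw [casimir, casimir, H.raise_mul_lower]
  noncomm_ring

theorem commute_casimir_lower (H : Sl2Relations h e f) : Commute (casimir h e f) f := by
  have hraise_lower_sq : e * f * f = f * (e * f) + (f * h - 2 * f) := by
    rw [H.raise_mul_lower, add_mul, H.weight_mul_lower, mul_assoc, H.raise_mul_lower]
  have hsq : (h - 1) ^ 2 * f = f * (h - 3) ^ 2 := by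
    have hstep (c : A) (hc : Commute c f) : (h - c) * f = f * (h - (c + 2)) := by
      rw [sub_mul, H.weight_mul_lower, hc.eq, mul_sub, mul_add, ← (Commute.ofNat_right f 2).eq]
      abel
    rw [pow_two, mul_assoc, hstep 1 (.one_left f), ← mul_assoc, hstep 1 (.one_left f), mul_assoc,
      ← pow_two]
    norm_num
  rw [Commute, SemiconjBy, casimir, add_mul, mul_assoc 4, hraise_lower_sq, hsq]
  noncomm_ring

theorem commute_casimir_raise (H : Sl2Relations h e f) : Commute (casimir h e f) e :=
  H.casimir_symm ▸ H.symm.commute_casimir_lower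

end Sl2Relations

/-- The space of vectors of integral weight `k` for the endomorphism `h`: its eigenspace for the
image of `k` in the base ring. -/
def weightSpace {R M : Type*} [CommRing R] [AddCommGroup M] [Module R M] (h : Module.End R M)
    (k : ℤ) : Submodule R M :=
  h.eigenspace (k : R)

section

variable {R M : Type*} [CommRing R] [AddCommGroup M] [Module R M] {h e f : Module.End R M}

theorem mem_weightSpace_iff {k : ℤ} {v : M} : v ∈ weightSpace h k ↔ h v = (k : R) • v :=
  Module.End.mem_eigenspace_iff

theorem weightSpace_neg (h : Module.End R M) (k : ℤ) :
    weightSpace (-h) k = weightSpace h (-k) := by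
  ext v
  simp [mem_weightSpace_iff, neg_eq_iff_eq_neg]

namespace Sl2Relations

theorem map_lower_weightSpace_le (H : Sl2Relations h e f) (k : ℤ) :
    (weightSpace h k).map f ≤ weightSpace h (k - 2) := by
  rintro _ ⟨v, hv, rfl⟩
  have hhf := LinearMap.congr_fun H.weight_mul_lower v
  rw [SetLike.mem_coe, mem_weightSpace_iff] at hv
  rw [mem_weightSpace_iff, ← Module.End.mul_apply, hhf, LinearMap.sub_apply,
    Module.End.mul_apply, hv, map_smul, two_mul, LinearMap.add_apply]
  push_cast
  module

theorem map_raise_weightSpace_le (H : Sl2Relations h e f) (k : ℤ) :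
    (weightSpace h k).map e ≤ weightSpace h (k - -2) := by
  have hmap := H.symm.map_lower_weightSpace_le (-k)
  rw [weightSpace_neg, weightSpace_neg, neg_neg] at hmap
  convert hmap using 2
  ring

end Sl2Relations

theorem four_smul_apply_apply_of_mem_weightSpace {m : ℤ} {v : M} (hv : v ∈ weightSpace h m) :
    (4 : R) • e (f v) = casimir h e f v - (((m - 1) ^ 2 : ℤ) : R) • v := by
  rw [mem_weightSpace_iff] at hv
  simp only [casimir, LinearMap.add_apply, Module.End.mul_apply, Module.End.ofNat_apply, pow_two,
    LinearMap.sub_apply, Module.End.one_apply, map_sub, map_smul, hv]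
  push_cast
  module

open Polynomial

/-- The polynomial through which the Casimir element computes `4 ^ r * (e ^ r * f ^ r)` on vectors
of weight `m`. -/
noncomputable def casimirPolynomial (R : Type*) [CommRing R] (m : ℤ) (r : ℕ) : R[X] :=
  ∏ j ∈ Finset.range r, (X - C (((m - 2 * j - 1) ^ 2 : ℤ) : R))

theorem casimirPolynomial_succ (R : Type*) [CommRing R] (m : ℤ) (r : ℕ) :
    casimirPolynomial R m (r + 1) =
      casimirPolynomial R m r * (X - C (((m - 2 * r - 1) ^ 2 : ℤ) : R)) :=
  Finset.prod_range_succ _ _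

theorem Sl2Relations.commute_aeval_casimir_lower (H : Sl2Relations h e f) (p : R[X]) :
    Commute (aeval (casimir h e f) p) f :=
  (Algebra.commute_of_mem_adjoin_singleton_of_commute (aeval_mem_adjoin_singleton R _)
    H.commute_casimir_lower.symm).symm

theorem Sl2Relations.commute_aeval_casimir_raise (H : Sl2Relations h e f) (p : R[X]) :
    Commute (aeval (casimir h e f) p) e :=
  H.casimir_symm ▸ H.symm.commute_aeval_casimir_lower p

theorem Sl2Relations.four_pow_smul_raise_pow_lower_pow (H : Sl2Relations h e f) {m : ℤ} {v : M}
    (hv : v ∈ weightSpace h m) (r : ℕ) :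
    (4 ^ r : R) • (e ^ r) ((f ^ r) v) = aeval (casimir h e f) (casimirPolynomial R m r) v := by
  induction r with
  | zero => simp [casimirPolynomial]
  | succ r ih =>
    have hfv : (f ^ r) v ∈ weightSpace h (m - r * 2) :=
      pow_apply_mem_of_map_le H.map_lower_weightSpace_le r hv
    have hcomm (x : M) : (e ^ r) (casimir h e f x) = casimir h e f ((e ^ r) x) :=
      LinearMap.congr_fun (H.commute_casimir_raise.pow_right r).eq.symm x
    have hlast : (4 : R) • (e ^ r) (e (f ((f ^ r) v))) =
        aeval (casimir h e f) (X - C (((m - 2 * r - 1) ^ 2 : ℤ) : R)) ((e ^ r) ((f ^ r) v)) := by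
      rw [← map_smul, four_smul_apply_apply_of_mem_weightSpace hfv, map_sub, map_smul, hcomm]
      simp only [map_sub, aeval_X, aeval_C, LinearMap.sub_apply, Module.algebraMap_end_apply,
        mul_comm (2 : ℤ)]
    rw [pow_succ e, pow_succ' f, Module.End.mul_apply, Module.End.mul_apply, pow_succ, mul_smul,
      hlast, ← map_smul, ih, casimirPolynomial_succ,
      mul_comm (casimirPolynomial R m r), map_mul, Module.End.mul_apply]

end

open Polynomial

variable {F V : Type*} [Field F] [CharZero F] [AddCommGroup V] [Module F V]
  {h e f : Module.End F V}

theorem isCoprime_casimirPolynomial (F : Type*) [Field F] [CharZero F] (n r : ℕ) :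
    IsCoprime (casimirPolynomial F n n) (casimirPolynomial F (-n) r) := by
  refine IsCoprime.prod_left fun i hi => IsCoprime.prod_right fun j _ => ?_
  apply isCoprime_X_sub_C_of_isUnit_sub
  rw [isUnit_iff_ne_zero, sub_ne_zero, Int.cast_injective.ne_iff, Ne,
    sq_eq_sq_iff_eq_or_eq_neg]
  have := Finset.mem_range.1 hi
  omega

theorem Sl2Relations.exists_commute_apply_raise_pow_lower_pow_eq (H : Sl2Relations h e f)
    {n r : ℕ} {v : V} (hv : v ∈ weightSpace h n) (hev : (e ^ r) v = 0) :
    ∃ g : Module.End F V, Commute g e ∧ Commute g f ∧ g ((e ^ n) ((f ^ n) v)) = v := by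
  -- `e ^ r` kills `v`, so a polynomial in the Casimir element coprime to the one computing
  -- `e ^ n * f ^ n` kills `v`; a Bézout coefficient then inverts `e ^ n * f ^ n` on `v`.
  obtain ⟨a, b, hab⟩ := isCoprime_casimirPolynomial F n r
  have hann : aeval (casimir h e f) (casimirPolynomial F (-n) r) v = 0 := by
    have hpow := H.symm.four_pow_smul_raise_pow_lower_pow (m := -n) (v := v)
      (by rwa [weightSpace_neg, neg_neg]) r
    rw [← H.casimir_symm, ← hpow, hev, map_zero, smul_zero]
  refine ⟨(4 : F) ^ n • aeval (casimir h e f) a, (H.commute_aeval_casimir_raise a).smul_left _,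
    (H.commute_aeval_casimir_lower a).smul_left _, ?_⟩
  calc ((4 : F) ^ n • aeval (casimir h e f) a) ((e ^ n) ((f ^ n) v))
      = aeval (casimir h e f) a (aeval (casimir h e f) (casimirPolynomial F n n) v) := by
        rw [← H.four_pow_smul_raise_pow_lower_pow hv, map_smul, LinearMap.smul_apply]
    _ = aeval (casimir h e f) (a * casimirPolynomial F n n + b * casimirPolynomial F (-n) r) v := by
        simp [hann]
    _ = v := by rw [hab, map_one, Module.End.one_apply]

theorem Sl2Relations.eq_zero_of_lower_pow_apply_eq_zero (H : Sl2Relations h e f) {n r : ℕ} {v : V}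
    (hv : v ∈ weightSpace h n) (hev : (e ^ r) v = 0) (hfv : (f ^ n) v = 0) : v = 0 := by
  obtain ⟨g, -, -, hg⟩ := H.exists_commute_apply_raise_pow_lower_pow_eq hv hev
  rw [← hg, hfv, map_zero, map_zero]

theorem Sl2Relations.mem_map_lower_pow (H : Sl2Relations h e f) {n r : ℕ} {v : V}
    (hv : v ∈ weightSpace h (-n)) (hfv : (f ^ r) v = 0) :
    v ∈ (weightSpace h n).map (f ^ n) := by
  obtain ⟨g, hgf, hge, hg⟩ := H.symm.exists_commute_apply_raise_pow_lower_pow_eq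
    (by rwa [weightSpace_neg]) hfv
  have hgh : Commute g h := by
    rw [← add_sub_cancel_left (f * e) h, ← H.raise_mul_lower]
    exact (hge.mul_right hgf).sub_right (hgf.mul_right hge)
  have hev : (e ^ n) v ∈ weightSpace h n := by
    convert pow_apply_mem_of_map_le H.map_raise_weightSpace_le n hv using 2
    ring
  refine ⟨g ((e ^ n) v), ?_, ?_⟩
  · rw [SetLike.mem_coe, mem_weightSpace_iff] at *
    rw [← Module.End.mul_apply, ← hgh.eq, Module.End.mul_apply, hev, map_smul]
  · rwa [← Module.End.mul_apply, ← (hgf.pow_right n).eq]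

/-- An `𝔰𝔩₂`-triple of endomorphisms whose weight element is diagonalizable with integral
eigenvalues. -/
structure IsSplitSl2Triple {R M : Type*} [CommRing R] [AddCommGroup M] [Module R M]
    (h e f : Module.End R M) : Prop extends Sl2Relations h e f where
  iSup_weightSpace : ⨆ k, weightSpace h k = ⊤

theorem iSupIndep_weightSpace (h : Module.End F V) : iSupIndep (weightSpace h) :=
  h.eigenspaces_iSupIndep.comp Int.cast_injective

theorem IsSplitSl2Triple.isWeightFiltration [FiniteDimensional F V] (H : IsSplitSl2Triple h e f)
    (w : ℤ) : IsWeightFiltration f w fun i => filtrationOfGrading (weightSpace h) (i - w) := by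
  have hind := iSupIndep_weightSpace h
  have hfin : {k | weightSpace h k ≠ ⊥}.Finite := WellFoundedGT.finite_ne_bot_of_iSupIndep hind
  suffices hzero : IsWeightFiltration f 0 (filtrationOfGrading (weightSpace h)) by
    simpa using hzero.shift w
  refine isWeightFiltration_filtrationOfGrading hind H.iSup_weightSpace hfin
    H.map_lower_weightSpace_le (fun n v hv => ?_) fun n v hv => ?_
  · obtain ⟨r, hr⟩ :=
      exists_pow_apply_eq_zero_of_map_le H.map_raise_weightSpace_le (by simp) hfin hv
    exact H.eq_zero_of_lower_pow_apply_eq_zero hv hr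
  · obtain ⟨r, hr⟩ :=
      exists_pow_apply_eq_zero_of_map_le H.map_lower_weightSpace_le two_ne_zero hfin hv
    exact H.mem_map_lower_pow hv hr

end Sl2

section Existence

namespace IsSplitSl2Triple

variable {R : Type*} [CommRing R]

theorem pi {ι : Type*} [Finite ι] {M : ι → Type*} [∀ i, AddCommGroup (M i)] [∀ i, Module R (M i)]
    {h e f : ∀ i, Module.End R (M i)} (H : ∀ i, IsSplitSl2Triple (h i) (e i) (f i)) :
    IsSplitSl2Triple (LinearMap.piMap h) (LinearMap.piMap e) (LinearMap.piMap f) where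
  raise_mul_lower := by
    ext x i
    simpa using LinearMap.congr_fun (H i).raise_mul_lower (x i)
  weight_mul_raise := by
    ext x i
    simpa using LinearMap.congr_fun (H i).weight_mul_raise (x i)
  weight_mul_lower := by
    ext x i
    simpa using LinearMap.congr_fun (H i).weight_mul_lower (x i)
  iSup_weightSpace := by
    classical
    rw [eq_top_iff, ← LinearMap.iSup_range_single]
    refine iSup_le fun i => ?_
    rw [← Submodule.map_top, ← (H i).iSup_weightSpace, Submodule.map_iSup]
    refine iSup_mono fun k => ?_
    rintro _ ⟨v, hv, rfl⟩
    rw [SetLike.mem_coe, mem_weightSpace_iff] at hv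
    rw [mem_weightSpace_iff]
    ext j
    obtain rfl | hj := eq_or_ne j i
    · simp [hv]
    · simp [hj]

variable {M M' : Type*} [AddCommGroup M] [Module R M] [AddCommGroup M'] [Module R M']

theorem of_surjective {h e f : Module.End R M} {h' e' f' : Module.End R M'}
    (H : IsSplitSl2Triple h e f) {π : M →ₗ[R] M'} (hπ : Function.Surjective π)
    (hh : ∀ x, h' (π x) = π (h x)) (he : ∀ x, e' (π x) = π (e x)) (hf : ∀ x, f' (π x) = π (f x)) :
    IsSplitSl2Triple h' e' f' where
  raise_mul_lower := by
    refine LinearMap.ext (hπ.forall.2 fun x => ?_)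
    simpa [hh, he, hf] using congrArg π (LinearMap.congr_fun H.raise_mul_lower x)
  weight_mul_raise := by
    refine LinearMap.ext (hπ.forall.2 fun x => ?_)
    simpa [hh, he] using congrArg π (LinearMap.congr_fun H.weight_mul_raise x)
  weight_mul_lower := by
    refine LinearMap.ext (hπ.forall.2 fun x => ?_)
    simpa [hh, hf] using congrArg π (LinearMap.congr_fun H.weight_mul_lower x)
  iSup_weightSpace := by
    rw [eq_top_iff, ← LinearMap.range_eq_top.2 hπ, ← Submodule.map_top, ← H.iSup_weightSpace,
      Submodule.map_iSup]
    refine iSup_mono fun k => ?_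
    rintro _ ⟨x, hx, rfl⟩
    rw [SetLike.mem_coe, mem_weightSpace_iff] at hx
    rw [mem_weightSpace_iff, hh, hx, map_smul]

end IsSplitSl2Triple

theorem exists_end_apply_eq_of_ker_le_comap {R M M' : Type*} [CommRing R] [AddCommGroup M]
    [Module R M] [AddCommGroup M'] [Module R M'] {π : M →ₗ[R] M'} (hπ : Function.Surjective π)
    {g : Module.End R M} (hg : LinearMap.ker π ≤ (LinearMap.ker π).comap g) :
    ∃ g' : Module.End R M', ∀ x, g' (π x) = π (g x) := by
  have hker : LinearMap.ker π ≤ LinearMap.ker (π ∘ₗ g) := by rwa [LinearMap.ker_comp]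
  refine ⟨(LinearMap.ker π).liftQ (π ∘ₗ g) hker ∘ₗ (π.quotKerEquivOfSurjective hπ).symm,
    fun x => ?_⟩
  have hsymm : (π.quotKerEquivOfSurjective hπ).symm (π x) = (LinearMap.ker π).mkQ x :=
    (LinearEquiv.symm_apply_eq _).2 rfl
  simp [hsymm]

open Polynomial

/-- The weight operator of the Verma module of highest weight `c` of `𝔰𝔩₂`, realized on `R[X]` with
`X ^ j` of weight `c - 2 * j` and with multiplication by `X` as lowering operator. -/
noncomputable def vermaWeight {R : Type*} [CommRing R] (c : R) : Module.End R R[X] :=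
  LinearMap.mulLeft R (C c) - 2 * (LinearMap.mulLeft R X * derivative)

/-- The raising operator of the Verma module of highest weight `c` of `𝔰𝔩₂`, realized on `R[X]` as
in `vermaWeight`. -/
noncomputable def vermaRaise {R : Type*} [CommRing R] (c : R) : Module.End R R[X] :=
  LinearMap.mulLeft R (C c) * derivative - LinearMap.mulLeft R X * derivative ^ 2

section Verma

variable {R : Type*} [CommRing R]

theorem vermaWeight_apply (c : R) (p : R[X]) :
    vermaWeight c p = C c * p - 2 * (X * derivative p) := by
  simp [vermaWeight]

theorem vermaRaise_apply (c : R) (p : R[X]) :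
    vermaRaise c p = C c * derivative p - X * derivative (derivative p) := by
  simp [vermaRaise, pow_two]

theorem sl2Relations_verma (c : R) :
    Sl2Relations (vermaWeight c) (vermaRaise c) (LinearMap.mulLeft R X) where
  raise_mul_lower := by
    refine LinearMap.ext fun p => ?_
    simp only [Module.End.mul_apply, LinearMap.mulLeft_apply, vermaRaise_apply, derivative_mul,
      derivative_X, one_mul, derivative_add, LinearMap.add_apply, vermaWeight_apply]
    ring
  weight_mul_raise := by
    refine LinearMap.ext fun p => ?_
    simp only [Module.End.mul_apply, vermaRaise_apply, vermaWeight_apply, derivative_sub,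
      derivative_mul, derivative_C, zero_mul, zero_add, derivative_X, one_mul, LinearMap.add_apply,
      derivative_ofNat, derivative_add, Module.End.ofNat_apply, nsmul_eq_mul, Nat.cast_ofNat]
    ring
  weight_mul_lower := by
    refine LinearMap.ext fun p => ?_
    simp only [Module.End.mul_apply, LinearMap.mulLeft_apply, vermaWeight_apply, derivative_mul,
      derivative_X, one_mul, LinearMap.sub_apply, Module.End.ofNat_apply, nsmul_eq_mul,
      Nat.cast_ofNat]
    ring

theorem monomial_mem_weightSpace_verma (m : ℤ) (j : ℕ) (a : R) :
    monomial j a ∈ weightSpace (vermaWeight (m : R)) (m - 2 * j) := by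
  rw [mem_weightSpace_iff, vermaWeight_apply, ← C_mul_X_pow_eq_monomial]
  cases j with
  | zero => simp [smul_eq_C_mul]
  | succ j =>
    simp only [smul_eq_C_mul, derivative_mul, derivative_C, derivative_X_pow_succ, map_intCast,
      map_natCast, map_add, map_sub, map_mul, map_one, map_ofNat, zero_mul, zero_add,
      Nat.cast_succ, Int.cast_sub, Int.cast_mul, Int.cast_ofNat, Int.cast_natCast, Int.cast_add,
      Int.cast_one]
    ring

theorem isSplitSl2Triple_verma (m : ℤ) :
    IsSplitSl2Triple (vermaWeight (m : R)) (vermaRaise (m : R)) (LinearMap.mulLeft R X) where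
  toSl2Relations := sl2Relations_verma _
  iSup_weightSpace := by
    refine eq_top_iff.2 fun p _ => ?_
    rw [← p.sum_monomial_eq]
    exact sum_mem fun j _ => Submodule.mem_iSup_of_mem _ (monomial_mem_weightSpace_verma m j _)

theorem X_pow_dvd_vermaWeight (c : R) {n : ℕ} {p : R[X]} (hp : X ^ n ∣ p) :
    X ^ n ∣ vermaWeight c p := by
  obtain ⟨q, rfl⟩ := hp
  refine ⟨C c * q - 2 * ((n : R[X]) * q + X * derivative q), ?_⟩
  rw [vermaWeight_apply]
  cases n with
  | zero => simp
  | succ n =>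
    simp only [derivative_mul, derivative_X_pow_succ, map_add, map_natCast, map_one, Nat.cast_add,
      Nat.cast_one]
    ring

/-- The raising operator sends `X ^ n` to `n * (c - n + 1) * X ^ (n - 1)`, which vanishes for
`c = n - 1`. -/
theorem X_pow_dvd_vermaRaise {n : ℕ} {p : R[X]} (hp : X ^ n ∣ p) :
    X ^ n ∣ vermaRaise (n - 1 : R) p := by
  obtain ⟨q, rfl⟩ := hp
  refine ⟨((n : R[X]) - 1) * derivative q - 2 * (n : R[X]) * derivative q -
    X * derivative (derivative q), ?_⟩
  rw [vermaRaise_apply]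
  rcases n with _ | _ | n
  · simp
  · simp only [zero_add, Nat.cast_one, sub_self, map_zero, pow_one, derivative_mul, derivative_X,
      one_mul, zero_mul, derivative_add, zero_sub, mul_one]
    ring
  · simp only [Nat.cast_add, Nat.cast_one, add_sub_cancel_right, map_add, map_natCast, map_one,
      derivative_mul, derivative_X_pow_succ, derivative_natCast, derivative_one, add_zero,
      zero_mul, zero_add]
    ring

end Verma

variable {F V : Type*} [Field F] [AddCommGroup V] [Module F V]

theorem exists_linearMap_pi_polynomial_of_isNilpotent [FiniteDimensional F V] {N : Module.End F V}
    (hN : IsNilpotent N) :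
    ∃ (d : ℕ) (k : Fin d → ℕ) (π : (Fin d → F[X]) →ₗ[F] V), Function.Surjective π ∧
      (∀ p, π p = 0 ↔ ∀ i, X ^ k i ∣ p i) ∧ ∀ p, N (π p) = π ((X : F[X]) • p) := by
  obtain ⟨m, hm⟩ := hN
  have htors : Module.IsTorsion' (Module.AEval' N) (Submonoid.powers (X : F[X])) := by
    intro x
    refine ⟨⟨X ^ m, m, rfl⟩, ?_⟩
    obtain ⟨v, rfl⟩ := (Module.AEval'.of N).surjective x
    change (X ^ m : F[X]) • Module.AEval'.of N v = 0
    rw [Module.AEval'.X_pow_smul_of, hm, zero_smul, map_zero]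
  obtain ⟨d, k, ⟨φ⟩⟩ := Module.torsion_by_prime_power_decomposition irreducible_X htors
  let ψ : Module.AEval' N ≃ₗ[F[X]] ∀ i : Fin d, F[X] ⧸ F[X] ∙ (X ^ k i : F[X]) :=
    φ.trans (DirectSum.linearEquivFunOnFintype F[X] (Fin d) _)
  let quot : (Fin d → F[X]) →ₗ[F[X]] ∀ i : Fin d, F[X] ⧸ F[X] ∙ (X ^ k i : F[X]) :=
    LinearMap.piMap fun i => (F[X] ∙ (X ^ k i : F[X])).mkQ
  have hquot : Function.Surjective quot :=
    Function.Surjective.piMap fun i => Submodule.mkQ_surjective _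
  refine ⟨d, k, (Module.AEval'.of N).symm ∘ₗ (ψ.symm.toLinearMap ∘ₗ quot).restrictScalars F, ?_,
    fun p => ?_, fun p => ?_⟩
  · exact (Module.AEval'.of N).symm.surjective.comp (ψ.symm.surjective.comp hquot)
  · have hquot_eq : quot p = 0 ↔ ∀ i, X ^ k i ∣ p i :=
      funext_iff.trans (forall_congr' fun i =>
        (Submodule.Quotient.mk_eq_zero _).trans Ideal.mem_span_singleton)
    simpa using hquot_eq
  · apply (Module.AEval'.of N).injective
    simp [← Module.AEval'.X_smul_of]

theorem exists_isSplitSl2Triple_of_isNilpotent [FiniteDimensional F V] {N : Module.End F V}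
    (hN : IsNilpotent N) : ∃ h e : Module.End F V, IsSplitSl2Triple h e N := by
  obtain ⟨d, k, π, hπ, hker, hX⟩ := exists_linearMap_pi_polynomial_of_isNilpotent hN
  have hverma := IsSplitSl2Triple.pi fun i => isSplitSl2Triple_verma (R := F) (k i - 1)
  obtain ⟨h, hh⟩ := exists_end_apply_eq_of_ker_le_comap hπ
    (g := LinearMap.piMap fun i => vermaWeight ((k i - 1 : ℤ) : F)) fun p hp =>
      (hker _).2 fun i => X_pow_dvd_vermaWeight _ ((hker p).1 hp i)
  obtain ⟨e, he⟩ := exists_end_apply_eq_of_ker_le_comap hπ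
    (g := LinearMap.piMap fun i => vermaRaise ((k i - 1 : ℤ) : F)) fun p hp =>
      (hker _).2 fun i => by simpa using X_pow_dvd_vermaRaise ((hker p).1 hp i)
  exact ⟨h, e, hverma.of_surjective hπ hh he hX⟩

end Existence

section Tensor

section

variable {R M M' : Type*} [CommRing R] [AddCommGroup M] [Module R M]
  [AddCommGroup M'] [Module R M'] {h e f : Module.End R M} {h' e' f' : Module.End R M'}

theorem commute_rTensor_lTensor (g : Module.End R M) (g' : Module.End R M') :
    Commute (g.rTensor M') (g'.lTensor M) := by
  rw [Commute, SemiconjBy, Module.End.mul_eq_comp, Module.End.mul_eq_comp,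
    LinearMap.rTensor_comp_lTensor, LinearMap.lTensor_comp_rTensor]

theorem commute_tensorProduct_map {a b : Module.End R M} {a' b' : Module.End R M'}
    (hab : Commute a b) (hab' : Commute a' b') :
    Commute (TensorProduct.map a a') (TensorProduct.map b b') := by
  rw [Commute, SemiconjBy, ← TensorProduct.map_mul, hab.eq, hab'.eq, TensorProduct.map_mul]

theorem isUnit_tensorProduct_map {a : Module.End R M} {a' : Module.End R M'} (ha : IsUnit a)
    (ha' : IsUnit a') : IsUnit (TensorProduct.map a a') := by
  rw [← LinearMap.rTensor_comp_lTensor]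
  exact (ha.map (Module.End.rTensorAlgHom R M M')).mul (ha'.map (Module.End.lTensorAlgHom R M' M))

theorem Sl2Relations.tensor (H : Sl2Relations h e f) (H' : Sl2Relations h' e' f') :
    Sl2Relations (h.rTensor M' + h'.lTensor M) (e.rTensor M' + e'.lTensor M)
      (f.rTensor M' + f'.lTensor M) :=
  (H.map (Module.End.rTensorAlgHom R M M').toRingHom).add
    (H'.map (Module.End.lTensorAlgHom R M' M).toRingHom) (commute_rTensor_lTensor e f')
    (commute_rTensor_lTensor f e').symm (commute_rTensor_lTensor h e')
    (commute_rTensor_lTensor e h').symm (commute_rTensor_lTensor h f')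
    (commute_rTensor_lTensor f h').symm

theorem tensorConvolution_weightSpace_le (h : Module.End R M) (h' : Module.End R M') (k : ℤ) :
    tensorConvolution (weightSpace h) (weightSpace h') k ≤
      weightSpace (h.rTensor M' + h'.lTensor M) k := by
  refine iSup_le fun j => Submodule.map₂_le.2 fun x hx y hy => ?_
  rw [mem_weightSpace_iff] at *
  simp only [TensorProduct.mk_apply, LinearMap.add_apply, LinearMap.rTensor_tmul,
    LinearMap.lTensor_tmul, hx, hy, ← TensorProduct.smul_tmul', TensorProduct.tmul_smul,
    Int.cast_sub]
  module

theorem IsSplitSl2Triple.tensor (H : IsSplitSl2Triple h e f) (H' : IsSplitSl2Triple h' e' f') :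
    IsSplitSl2Triple (h.rTensor M' + h'.lTensor M) (e.rTensor M' + e'.lTensor M)
      (f.rTensor M' + f'.lTensor M) where
  toSl2Relations := H.toSl2Relations.tensor H'.toSl2Relations
  iSup_weightSpace := top_le_iff.1 <|
    (iSup_tensorConvolution_eq_top H.iSup_weightSpace H'.iSup_weightSpace).ge.trans
      (iSup_mono (tensorConvolution_weightSpace_le h h'))

end

variable {F V V' : Type*} [Field F] [CharZero F] [AddCommGroup V] [Module F V]
  [AddCommGroup V'] [Module F V']

theorem tensorConvolution_weightSpace {h : Module.End F V} {h' : Module.End F V'}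
    (hh : ⨆ k, weightSpace h k = ⊤) (hh' : ⨆ k, weightSpace h' k = ⊤) :
    tensorConvolution (weightSpace h) (weightSpace h') =
      weightSpace (h.rTensor V' + h'.lTensor V) :=
  ((iSupIndep_weightSpace _).le_iff_eq_of_iSup_eq_top (iSup_tensorConvolution_eq_top hh hh')).1
    (tensorConvolution_weightSpace_le h h')

variable [FiniteDimensional F V] [FiniteDimensional F V']
  {N : Module.End F V} {N' : Module.End F V'} {w w' : ℤ}
  {W : ℤ → Submodule F V} {W' : ℤ → Submodule F V'}

theorem IsWeightFiltration.tensor (hW : IsWeightFiltration N w W)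
    (hW' : IsWeightFiltration N' w' W') :
    IsWeightFiltration (N.rTensor V' + N'.lTensor V) (w + w') (tensorConvolution W W') := by
  obtain ⟨h, e, H⟩ := exists_isSplitSl2Triple_of_isNilpotent hW.isNilpotent
  obtain ⟨h', e', H'⟩ := exists_isSplitSl2Triple_of_isNilpotent hW'.isNilpotent
  rw [hW.unique (H.isWeightFiltration w), hW'.unique (H'.isWeightFiltration w')]
  convert (H.tensor H').isWeightFiltration (w + w') using 1
  rw [← tensorConvolution_weightSpace H.iSup_weightSpace H'.iSup_weightSpace]
  exact funext (tensorConvolution_filtrationOfGrading w w')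

theorem IsWeightFiltration.map_one_add_sub_one (hW : IsWeightFiltration N w W)
    (hW' : IsWeightFiltration N' w' W') :
    IsWeightFiltration (TensorProduct.map (1 + N) (1 + N') - 1) (w + w')
      (tensorConvolution W W') := by
  have hsum : IsWeightFiltration (N.rTensor V' + N'.lTensor V) (w + w') (tensorConvolution W W') :=
    hW.tensor hW'
  have hprod (i : ℤ) : (tensorConvolution W W' i).map (TensorProduct.map N N') ≤
      tensorConvolution W W' (i - 3) :=
    (map_tensorConvolution_le hW.map_le hW'.map_le i).trans (hsum.monotone (by omega))
  convert hsum.add_of_map_le_sub_three hprod using 1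
  simp only [TensorProduct.map_add_left, TensorProduct.map_add_right, TensorProduct.map_id,
    LinearMap.rTensor, LinearMap.lTensor, Module.End.one_eq_id]
  abel

theorem IsWeightFiltration.map_add_sub_map (hW : IsWeightFiltration N w W)
    (hW' : IsWeightFiltration N' w' W') {u : (Module.End F V)ˣ} {u' : (Module.End F V')ˣ}
    (hu : Commute (u : Module.End F V) N) (hu' : Commute (u' : Module.End F V') N') :
    IsWeightFiltration
      (TensorProduct.map (u.val + N) (u'.val + N') - TensorProduct.map u.val u'.val) (w + w')
      (tensorConvolution W W') := by
  have hunip := (hW.unit_mul hu.units_inv_left).map_one_add_sub_one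
    (hW'.unit_mul hu'.units_inv_left)
  obtain ⟨uu', huu'⟩ := isUnit_tensorProduct_map u.isUnit u'.isUnit
  have hcomm : Commute u.val (1 + u⁻¹.val * N) :=
    (Commute.one_right _).add_right ((Commute.refl _).units_inv_right.mul_right hu)
  have hcomm' : Commute u'.val (1 + u'⁻¹.val * N') :=
    (Commute.one_right _).add_right ((Commute.refl _).units_inv_right.mul_right hu')
  convert hunip.unit_mul (u := uu') ?_ using 1
  · rw [huu', mul_sub_one, ← TensorProduct.map_mul]
    simp only [mul_add, mul_one, Units.mul_inv_cancel_left]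
  · rw [huu']
    exact (commute_tensorProduct_map hcomm hcomm').sub_right (.one_right _)

end Tensor

section JordanChevalley

variable {F V V' : Type*} [Field F] [AddCommGroup V] [Module F V] [AddCommGroup V'] [Module F V']

theorem isSemisimple_algHom_apply [FiniteDimensional F V]
    (φ : Module.End F V →ₐ[F] Module.End F V') {S : Module.End F V} (hS : S.IsSemisimple) :
    (φ S).IsSemisimple :=
  Module.End.isSemisimple_of_squarefree_aeval_eq_zero hS.minpoly_squarefree <| by
    rw [Polynomial.aeval_algHom_apply, minpoly.aeval, map_zero]

theorem isSemisimple_tensorProduct_map [PerfectField F] [FiniteDimensional F V]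
    [FiniteDimensional F V'] {S : Module.End F V} {S' : Module.End F V'} (hS : S.IsSemisimple)
    (hS' : S'.IsSemisimple) : Module.End.IsSemisimple (TensorProduct.map S S') := by
  rw [← LinearMap.rTensor_comp_lTensor]
  exact Module.End.IsSemisimple.mul_of_commute (commute_rTensor_lTensor S S')
    (isSemisimple_algHom_apply (Module.End.rTensorAlgHom F V V') hS)
    (isSemisimple_algHom_apply (Module.End.lTensorAlgHom F V' V) hS')

theorem isUnit_of_bijective_add {R M : Type*} [Semiring R] [AddCommGroup M] [Module R M]
    {S N : Module.End R M} (hbij : Function.Bijective (S + N)) (hN : IsNilpotent N)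
    (hc : Commute S N) : IsUnit S := by
  have hunit : IsUnit (S + N) := (Module.End.isUnit_iff _).2 hbij
  rw [← add_neg_cancel_right S N]
  exact hN.neg.isUnit_add_left_of_commute hunit (hc.add_left (.refl N)).neg_right.symm

end JordanChevalley

/-- Let `M`, `M'` be automorphisms of finite dimensional vector spaces `V`, `V'` over a
field of characteristic zero, with Jordan–Chevalley decompositions `M = Ms + Mn` and
`M' = Ms' + Mn'`, and let `W`, `W'` be the weight filtrations centered at `w`, `w'`
associated to `Mn`, `Mn'`. If `M ⊗ M' = T + P` is a Jordan–Chevalley decomposition of the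
automorphism `M ⊗ M'` of `V ⊗ V'` (`T` semisimple, `P` nilpotent, commuting), then the
weight filtration on `V ⊗ V'` centered at `w + w'` associated to `P` is the tensor product
filtration `(W ⊗ W')_i = Σ_{i₁ + i₂ = i} W_{i₁} ⊗ W'_{i₂}`. -/
theorem weightFiltration_tensor_jordanChevalley
    (F V V' : Type*) [Field F] [CharZero F]
    [AddCommGroup V] [Module F V] [FiniteDimensional F V]
    [AddCommGroup V'] [Module F V'] [FiniteDimensional F V']
    (M Ms Mn : V →ₗ[F] V) (hMbij : Function.Bijective M)
    (hM : M = Ms + Mn) (hMs : Module.End.IsSemisimple Ms) (hMn : IsNilpotent Mn)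
    (hMc : Commute Ms Mn)
    (M' Ms' Mn' : V' →ₗ[F] V') (hM'bij : Function.Bijective M')
    (hM' : M' = Ms' + Mn') (hMs' : Module.End.IsSemisimple Ms') (hMn' : IsNilpotent Mn')
    (hMc' : Commute Ms' Mn')
    (w w' : ℤ) (W : ℤ → Submodule F V) (W' : ℤ → Submodule F V')
    (hW : IsWeightFiltration Mn w W) (hW' : IsWeightFiltration Mn' w' W')
    (T P : V ⊗[F] V' →ₗ[F] V ⊗[F] V')
    (hTP : TensorProduct.map M M' = T + P)
    (hT : Module.End.IsSemisimple T) (hP : IsNilpotent P) (hTPc : Commute T P) :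
    IsWeightFiltration P (w + w')
      (fun i : ℤ =>
        ⨆ j : ℤ, Submodule.map₂ (TensorProduct.mk F V V') (W j) (W' (i - j))) := by
  subst hM hM'
  obtain ⟨u, rfl⟩ := isUnit_of_bijective_add hMbij hMn hMc
  obtain ⟨u', rfl⟩ := isUnit_of_bijective_add hM'bij hMn' hMc'
  set D := TensorProduct.map (u.val + Mn) (u'.val + Mn') - TensorProduct.map u.val u'.val with hD
  have hfil : IsWeightFiltration D (w + w') (tensorConvolution W W') :=
    hW.map_add_sub_map hW' hMc hMc'
  have hcomm : Commute D (TensorProduct.map u.val u'.val) :=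
    .sub_left (commute_tensorProduct_map (.add_left (.refl _) hMc.symm)
      (.add_left (.refl _) hMc'.symm)) (.refl _)
  have hPD : P = D :=
    (Module.End.isNilpotent_isSemisimple_unique hP hT hfil.isNilpotent
      (isSemisimple_tensorProduct_map hMs hMs') hTPc.symm hcomm
      (by rw [add_comm, ← hTP, hD, sub_add_cancel])).1
  rw [hPD]
  exact hfil
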